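/- arXiv:1104.3687 — 8 statements merged into one kernel-verified Lean document; each statement's English description precedes it below -/
import Mathlib

section
/- Let N ≥ 2 be an integer, K > 0, μ ≥ 0, ξ ∈ ℝ, α ≥ 0, and d_1,…,d_N ∈ ℝ. Let I ⊆ ℝ be an open interval and let a_1,…,a_N : I → ℝ be twice differentiable functions with a_i(t) > 0 for all t ∈ I, satisfying ä_i(t) = ξ / a_i(t) for all t ∈ I and all i. Define s(t,x) = Σ_{k=1}^N (x_k+d_k)²/a_k(t)², ρ(t,x) = α·e^{−ξ s(t,x)/(2K)} / ∏_{k=1}^N a_k(t), and u_i(t,x) = (ȧ_i(t)/a_i(t))·(x_i + d_i). Then (ρ, u) satisfies, at every (t,x) ∈ I × ℝ^N, the compressible Euler/Navier–Stokes equations with γ = 1: the mass equation ∂ρ/∂t + Σ_{k=1}^N ∂(ρ u_k)/∂x_k = 0 and, for each i = 1,…,N, the momentum equation ρ·(∂u_i/∂t + Σ_{k=1}^N u_k ∂u_i/∂x_k) + K·∂ρ/∂x_i = μ·Σ_{k=1}^N ∂²u_i/∂x_k². -/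
/-- For `γ = 1`, with `aᵢ` solving the Emden system `äᵢ = ξ/aᵢ`,
the functions `ρ(t,x) = α e^{−ξ s/(2K)} / ∏ₖ aₖ(t)`, `s = Σₖ (xₖ+dₖ)²/aₖ(t)²`,
`uᵢ(t,x) = (ȧᵢ/aᵢ)(xᵢ+dᵢ)` solve the compressible Euler/Navier–Stokes equations:
the mass equation and, for each `i`, the momentum equation
`ρ(∂ₜuᵢ + Σₖ uₖ ∂ₖuᵢ) + K ∂ᵢρ = μ Δuᵢ`. -/
theorem euler_navier_stokes_gamma_one_elliptic_solution
    (N : ℕ) (hN : 2 ≤ N)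
    (K μ ξ α : ℝ) (hK : 0 < K) (hμ : 0 ≤ μ) (hα : 0 ≤ α)
    (d : Fin N → ℝ)
    (I : Set ℝ) (hI_open : IsOpen I) (hI_conn : I.OrdConnected)
    (a : Fin N → ℝ → ℝ)
    (ha_pos : ∀ i : Fin N, ∀ t ∈ I, 0 < a i t)
    (ha_diff : ∀ i : Fin N, ∀ t ∈ I,
      DifferentiableAt ℝ (a i) t ∧ DifferentiableAt ℝ (deriv (a i)) t)
    (hEmden : ∀ i : Fin N, ∀ t ∈ I, deriv (deriv (a i)) t = ξ / a i t)
    (s : ℝ → (Fin N → ℝ) → ℝ)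
    (hs : ∀ (t : ℝ) (x : Fin N → ℝ), s t x = ∑ k : Fin N, (x k + d k) ^ 2 / (a k t) ^ 2)
    (ρ : ℝ → (Fin N → ℝ) → ℝ)
    (hρ : ∀ (t : ℝ) (x : Fin N → ℝ),
      ρ t x = α * Real.exp (-ξ * s t x / (2 * K)) / ∏ k : Fin N, a k t)
    (u : Fin N → ℝ → (Fin N → ℝ) → ℝ)
    (hu : ∀ (i : Fin N) (t : ℝ) (x : Fin N → ℝ),
      u i t x = deriv (a i) t / a i t * (x i + d i)) :
    ∀ t ∈ I, ∀ x : Fin N → ℝ,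
      (deriv (fun τ => ρ τ x) t
        + ∑ k : Fin N,
            deriv (fun y => ρ t (Function.update x k y) * u k t (Function.update x k y)) (x k)
        = 0)
      ∧
      (∀ i : Fin N,
        ρ t x * (deriv (fun τ => u i τ x) t
            + ∑ k : Fin N, u k t x * deriv (fun y => u i t (Function.update x k y)) (x k))
          + K * deriv (fun y => ρ t (Function.update x i y)) (x i)
        = μ * ∑ k : Fin N,
            deriv (fun y => deriv (fun z => u i t (Function.update x k z)) y) (x k)) := by
  intro t ht x
  have hane : ∀ k, a k t ≠ 0 := fun k => (ha_pos k t ht).ne'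
  have hPne : ∏ k, a k t ≠ 0 := Finset.prod_ne_zero_iff.mpr (fun k _ => hane k)
  have hKne : K ≠ 0 := hK.ne'
  have hda : ∀ k, HasDerivAt (a k) (deriv (a k) t) t := fun k => (ha_diff k t ht).1.hasDerivAt
  have hdda : ∀ k, HasDerivAt (deriv (a k)) (ξ / a k t) t := fun k => by
    rw [← hEmden k t ht]; exact (ha_diff k t ht).2.hasDerivAt
  -- time derivative of s
  have hst : HasDerivAt (fun τ => s τ x)
      (∑ k, -(2 * (x k + d k) ^ 2 * deriv (a k) t / (a k t) ^ 3)) t := by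
    simp only [hs]
    refine HasDerivAt.fun_sum (fun k _ => ?_)
    have h := (hasDerivAt_const t ((x k + d k) ^ 2)).fun_div ((hda k).fun_pow 2)
      (pow_ne_zero 2 (hane k))
    refine h.congr_deriv ?_
    have := hane k
    field_simp
    ring
  have hPt : HasDerivAt (fun τ => ∏ k, a k τ)
      ((∏ k, a k t) * ∑ k, deriv (a k) t / a k t) t := by
    have h := HasDerivAt.fun_finset_prod (u := Finset.univ) (fun k _ => hda k)
    refine h.congr_deriv ?_
    rw [Finset.mul_sum]
    refine Finset.sum_congr rfl (fun k _ => ?_)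
    rw [← Finset.mul_prod_erase Finset.univ (fun j => a j t) (Finset.mem_univ k), smul_eq_mul]
    have := hane k
    field_simp
  have hρt : HasDerivAt (fun τ => ρ τ x)
      (ρ t x * (-ξ / (2 * K) * (∑ k, -(2 * (x k + d k) ^ 2 * deriv (a k) t / (a k t) ^ 3))
        - ∑ k, deriv (a k) t / a k t)) t := by
    have h := ((((hst.const_mul (-ξ)).div_const (2 * K)).exp).const_mul α).fun_div hPt hPne
    simp only [hρ]
    refine h.congr_deriv ?_
    field_simp
  -- space derivatives
  have hsx : ∀ k, HasDerivAt (fun y => s t (Function.update x k y))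
      (2 * (x k + d k) / (a k t) ^ 2) (x k) := by
    intro k
    simp only [hs]
    have h : HasDerivAt (fun y => ∑ j, (Function.update x k y j + d j) ^ 2 / (a j t) ^ 2)
        (∑ j, if j = k then 2 * (x k + d k) / (a k t) ^ 2 else 0) (x k) := by
      refine HasDerivAt.fun_sum (fun j _ => ?_)
      by_cases hj : j = k
      · subst hj
        simp only [Function.update_self, if_true]
        have h := ((((hasDerivAt_id (x j)).add_const (d j)).fun_pow 2).div_const ((a j t) ^ 2))
        refine h.congr_deriv ?_
        simp
      · simp only [Function.update_of_ne hj, if_neg hj]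
        exact hasDerivAt_const _ _
    simpa using h
  have hρx : ∀ k, HasDerivAt (fun y => ρ t (Function.update x k y))
      (ρ t x * (-ξ / K * (x k + d k) / (a k t) ^ 2)) (x k) := by
    intro k
    simp only [hρ]
    have h := (((((hsx k).const_mul (-ξ)).div_const (2 * K)).exp).const_mul α).div_const
      (∏ k, a k t)
    refine h.congr_deriv ?_
    rw [Function.update_eq_self]
    have := hane k
    field_simp
  have hux : ∀ i k y, HasDerivAt (fun y => u i t (Function.update x k y))
      (if i = k then deriv (a i) t / a i t else 0) y := by
    intro i k y
    simp only [hu]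
    by_cases hj : i = k
    · subst hj
      simp only [Function.update_self, if_true]
      simpa using ((hasDerivAt_id y).add_const (d i)).const_mul (deriv (a i) t / a i t)
    · simp only [Function.update_of_ne hj, if_neg hj]
      exact hasDerivAt_const _ _
  have hut : ∀ i, HasDerivAt (fun τ => u i τ x)
      ((ξ / (a i t) ^ 2 - (deriv (a i) t / a i t) ^ 2) * (x i + d i)) t := by
    intro i
    simp only [hu]
    have h := ((hdda i).fun_div (hda i) (hane i)).mul_const (x i + d i)
    refine h.congr_deriv ?_
    have := hane i
    field_simp
  refine ⟨?_, fun i => ?_⟩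
  · have hk : ∀ k, deriv (fun y => ρ t (Function.update x k y) * u k t (Function.update x k y))
        (x k) = ρ t x * (-ξ / (2 * K) * (2 * (x k + d k) ^ 2 * deriv (a k) t / (a k t) ^ 3)
          + deriv (a k) t / a k t) := by
      intro k
      rw [((hρx k).fun_mul (hux k k (x k))).deriv]
      simp only [Function.update_eq_self, if_true, hu]
      have := hane k
      field_simp
    simp only [hk]
    rw [hρt.deriv, ← Finset.mul_sum, Finset.sum_add_distrib, ← Finset.mul_sum,
      Finset.sum_neg_distrib]
    ring
  · have h2 : ∀ k, deriv (fun y => deriv (fun z => u i t (Function.update x k z)) y) (x k)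
        = 0 := by
      intro k
      have : (fun y => deriv (fun z => u i t (Function.update x k z)) y)
          = fun _ => (if i = k then deriv (a i) t / a i t else 0) := by
        funext y
        exact (hux i k y).deriv
      rw [this, deriv_const]
    have h1 : ∀ k, deriv (fun y => u i t (Function.update x k y)) (x k)
        = if i = k then deriv (a i) t / a i t else 0 := fun k => (hux i k (x k)).deriv
    simp only [h2, h1, (hut i).deriv, (hρx i).deriv]
    simp only [mul_ite, mul_zero, Finset.sum_ite_eq, Finset.mem_univ, if_true,
      Finset.sum_const_zero, hu]
    have := hane i
    field_simp
    ring
end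

section
/- Let N ≥ 2 be an integer, K > 0, μ ≥ 0, γ > 1, ξ ∈ ℝ, α ≥ 0, and d_1,…,d_N ∈ ℝ. Let I ⊆ ℝ be an open interval and let a_1,…,a_N : I → ℝ be twice differentiable functions with a_i(t) > 0 for all t ∈ I, satisfying the Emden dynamical system ä_i(t) = ξ / (a_i(t)·(∏_{k=1}^N a_k(t))^{γ−1}) for all t ∈ I and all i. Define s(t,x) = Σ_{k=1}^N (x_k+d_k)²/a_k(t)², and on the open set Ω = {(t,x) ∈ I × ℝ^N : α − ξ(γ−1)s(t,x)/(2Kγ) > 0} define ρ(t,x) = (α − ξ(γ−1)s(t,x)/(2Kγ))^{1/(γ−1)} / ∏_{k=1}^N a_k(t) and u_i(t,x) = (ȧ_i(t)/a_i(t))·(x_i + d_i). Then at every point of Ω, (ρ, u) satisfies the mass equation ∂ρ/∂t + Σ_{k=1}^N ∂(ρ u_k)/∂x_k = 0 and, for each i, the momentum equation ρ·(∂u_i/∂t + Σ_{k=1}^N u_k ∂u_i/∂x_k) + K·∂(ρ^γ)/∂x_i = μ·Σ_{k=1}^N ∂²u_i/∂x_k². -/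
/-- For `γ > 1`, with `aᵢ` solving the Emden dynamical system
`äᵢ = ξ/(aᵢ (∏ₖ aₖ)^{γ−1})`, the functions
`ρ(t,x) = (α − ξ(γ−1)s/(2Kγ))^{1/(γ−1)} / ∏ₖ aₖ(t)`, `s = Σₖ (xₖ+dₖ)²/aₖ(t)²`,
`uᵢ(t,x) = (ȧᵢ/aᵢ)(xᵢ+dᵢ)` solve, on the region `Ω` where
`α − ξ(γ−1)s/(2Kγ) > 0`, the mass equation and, for each `i`, the momentum
equation `ρ(∂ₜuᵢ + Σₖ uₖ ∂ₖuᵢ) + K ∂ᵢ(ρ^γ) = μ Δuᵢ`. -/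
theorem euler_navier_stokes_gamma_gt_one_elliptic_solution
    (N : ℕ) (hN : 2 ≤ N)
    (K μ γ ξ α : ℝ) (hK : 0 < K) (hμ : 0 ≤ μ) (hγ : 1 < γ) (hα : 0 ≤ α)
    (d : Fin N → ℝ)
    (I : Set ℝ) (hI_open : IsOpen I) (hI_conn : I.OrdConnected)
    (a : Fin N → ℝ → ℝ)
    (ha_pos : ∀ i : Fin N, ∀ t ∈ I, 0 < a i t)
    (ha_diff : ∀ i : Fin N, ∀ t ∈ I,
      DifferentiableAt ℝ (a i) t ∧ DifferentiableAt ℝ (deriv (a i)) t)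
    (hEmden : ∀ i : Fin N, ∀ t ∈ I,
      deriv (deriv (a i)) t = ξ / (a i t * (∏ k : Fin N, a k t) ^ (γ - 1)))
    (s : ℝ → (Fin N → ℝ) → ℝ)
    (hs : ∀ (t : ℝ) (x : Fin N → ℝ), s t x = ∑ k : Fin N, (x k + d k) ^ 2 / (a k t) ^ 2)
    (ρ : ℝ → (Fin N → ℝ) → ℝ)
    (hρ : ∀ (t : ℝ) (x : Fin N → ℝ),
      ρ t x = (α - ξ * (γ - 1) * s t x / (2 * K * γ)) ^ (1 / (γ - 1))
                / ∏ k : Fin N, a k t)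
    (u : Fin N → ℝ → (Fin N → ℝ) → ℝ)
    (hu : ∀ (i : Fin N) (t : ℝ) (x : Fin N → ℝ),
      u i t x = deriv (a i) t / a i t * (x i + d i)) :
    ∀ t ∈ I, ∀ x : Fin N → ℝ,
      0 < α - ξ * (γ - 1) * s t x / (2 * K * γ) →
      (deriv (fun τ => ρ τ x) t
        + ∑ k : Fin N,
            deriv (fun y => ρ t (Function.update x k y) * u k t (Function.update x k y)) (x k)
        = 0)
      ∧
      (∀ i : Fin N,
        ρ t x * (deriv (fun τ => u i τ x) t
            + ∑ k : Fin N, u k t x * deriv (fun y => u i t (Function.update x k y)) (x k))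
          + K * deriv (fun y => (ρ t (Function.update x i y)) ^ γ) (x i)
        = μ * ∑ k : Fin N,
            deriv (fun y => deriv (fun z => u i t (Function.update x k z)) y) (x k)) := by
  intro t ht x hF
  have hγ1 : γ - 1 ≠ 0 := by linarith
  have hγ0 : γ ≠ 0 := by linarith
  have hK0 : K ≠ 0 := hK.ne'
  have hapos : ∀ k, 0 < a k t := fun k => ha_pos k t ht
  have hane : ∀ k, a k t ≠ 0 := fun k => (hapos k).ne'
  have hApos : 0 < ∏ k : Fin N, a k t := Finset.prod_pos fun k _ => hapos k
  have had : ∀ k, HasDerivAt (a k) (deriv (a k) t) t := fun k => (ha_diff k t ht).1.hasDerivAt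
  have hadd : ∀ k, HasDerivAt (deriv (a k)) (deriv (deriv (a k)) t) t :=
    fun k => (ha_diff k t ht).2.hasDerivAt
  have hup : ∀ (k j : Fin N) (y : ℝ), HasDerivAt (fun y => Function.update x k y j)
      (if j = k then 1 else 0) y := by
    intro k j y
    by_cases h : j = k
    · subst h
      simpa using hasDerivAt_id' y
    · simpa [h] using hasDerivAt_const y (x j)
  -- derivatives of `s`
  have hsx : ∀ k, HasDerivAt (fun y => s t (Function.update x k y))
      (2 * (x k + d k) / (a k t) ^ 2) (x k) := by
    intro k
    simp only [hs]
    have h := HasDerivAt.fun_sum (u := Finset.univ) (fun (j : Fin N) _ =>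
      (((hup k j (x k)).add_const (d j)).pow 2).div_const ((a j t) ^ 2))
    refine h.congr_deriv ?_
    rw [Finset.sum_eq_single k]
    · simp
    · intro j _ hj
      simp [hj]
    · simp
  have hst : HasDerivAt (fun τ => s τ x)
      (∑ k, -(2 * (x k + d k) ^ 2 * deriv (a k) t / (a k t) ^ 3)) t := by
    simp only [hs]
    refine HasDerivAt.fun_sum (u := Finset.univ) (fun (j : Fin N) _ => ?_)
    have h := (hasDerivAt_const t ((x j + d j) ^ 2)).div ((had j).pow 2) (pow_ne_zero 2 (hane j))
    refine h.congr_deriv ?_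
    have := hane j
    simp only [Pi.pow_apply]
    field_simp
    push_cast
    ring
  have hAt : HasDerivAt (fun τ => ∏ k : Fin N, a k τ)
      ((∏ k : Fin N, a k t) * ∑ k, deriv (a k) t / a k t) t := by
    have h := HasDerivAt.fun_finsetProd (u := Finset.univ) (fun (j : Fin N) _ => had j)
    refine h.congr_deriv ?_
    rw [Finset.mul_sum]
    refine Finset.sum_congr rfl fun j _ => ?_
    rw [← Finset.mul_prod_erase Finset.univ (fun k => a k t) (Finset.mem_univ j), smul_eq_mul]
    have := hane j
    field_simp
  -- derivatives of `ρ`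
  set F := α - ξ * (γ - 1) * s t x / (2 * K * γ) with hFdef
  set A := ∏ k : Fin N, a k t with hAdef
  have hFne : F ≠ 0 := hF.ne'
  have hAne : A ≠ 0 := hApos.ne'
  have hρpos : 0 < ρ t x := by
    rw [hρ]
    exact div_pos (Real.rpow_pos_of_pos hF _) hApos
  have hFp : F ^ (1 / (γ - 1) - 1) = ρ t x * A / F := by
    rw [Real.rpow_sub_one hFne, hρ, ← hFdef, ← hAdef, div_mul_cancel₀ _ hAne]
  have hFp' : F ^ (1 / (γ - 1)) = ρ t x * A := by
    rw [hρ, ← hFdef, ← hAdef, div_mul_cancel₀ _ hAne]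
  have hρx : ∀ k, HasDerivAt (fun y => ρ t (Function.update x k y))
      (-(ρ t x / F * (ξ * (x k + d k) / (K * γ * (a k t) ^ 2)))) (x k) := by
    intro k
    simp only [hρ t (Function.update x k _)]
    have h := (((((hsx k).const_mul (ξ * (γ - 1))).div_const (2 * K * γ)).const_sub α).rpow_const
      (p := 1 / (γ - 1)) (Or.inl (by simpa using hFne))).div_const A
    refine h.congr_deriv ?_
    simp only [Function.update_eq_self]
    rw [← hFdef, hFp]
    have := hane k
    field_simp
  have hρt : HasDerivAt (fun τ => ρ τ x)
      (ρ t x / F * (∑ k, ξ * (x k + d k) ^ 2 * deriv (a k) t / (K * γ * (a k t) ^ 3))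
        - ρ t x * ∑ k, deriv (a k) t / a k t) t := by
    simp only [hρ _ x]
    have h := ((((hst.const_mul (ξ * (γ - 1))).div_const (2 * K * γ)).const_sub α).rpow_const
      (p := 1 / (γ - 1)) (Or.inl hFne)).div hAt hAne
    refine h.congr_deriv ?_
    rw [← hFdef, hFp, hFp', ← hAdef]
    have e : (∑ k, -(2 * (x k + d k) ^ 2 * deriv (a k) t / (a k t) ^ 3)) * ξ
        = - (2 * K * γ) * ∑ k, ξ * (x k + d k) ^ 2 * deriv (a k) t / (K * γ * (a k t) ^ 3) := by
      rw [Finset.mul_sum, Finset.sum_mul]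
      refine Finset.sum_congr rfl fun j _ => ?_
      have := hane j
      field_simp
    have e2 : ξ * (γ - 1) * (∑ k, -(2 * (x k + d k) ^ 2 * deriv (a k) t / (a k t) ^ 3))
        = (γ - 1) * (- (2 * K * γ) *
          ∑ k, ξ * (x k + d k) ^ 2 * deriv (a k) t / (K * γ * (a k t) ^ 3)) := by
      rw [← e]; ring
    rw [e2]
    generalize (∑ k, ξ * (x k + d k) ^ 2 * deriv (a k) t / (K * γ * (a k t) ^ 3)) = S1
    generalize (∑ k, deriv (a k) t / a k t) = S2
    field_simp
  have hux : ∀ (i k : Fin N) (y : ℝ), HasDerivAt (fun y => u i t (Function.update x k y))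
      (deriv (a i) t / a i t * (if i = k then 1 else 0)) y := by
    intro i k y
    simp only [hu]
    exact ((hup k i y).add_const (d i)).const_mul _
  constructor
  · rw [hρt.deriv]
    have h : ∀ k, deriv (fun y => ρ t (Function.update x k y) * u k t (Function.update x k y)) (x k)
        = ρ t x * (deriv (a k) t / a k t)
          - ρ t x / F * (ξ * (x k + d k) ^ 2 * deriv (a k) t / (K * γ * (a k t) ^ 3)) := by
      intro k
      rw [((hρx k).fun_mul (hux k k (x k))).deriv]
      simp only [Function.update_eq_self, if_true, hu k t x]
      have := hane k
      field_simp
      ring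
    simp only [h]
    rw [Finset.sum_sub_distrib, ← Finset.mul_sum, ← Finset.mul_sum]
    ring
  · intro i
    have hut : deriv (fun τ => u i τ x) t
        = (deriv (deriv (a i)) t * a i t - deriv (a i) t * deriv (a i) t) / (a i t) ^ 2
          * (x i + d i) := by
      simp only [hu]
      exact (((hadd i).div (had i) (hane i)).mul_const _).deriv
    have hsum : ∑ k : Fin N, u k t x * deriv (fun y => u i t (Function.update x k y)) (x k)
        = u i t x * (deriv (a i) t / a i t) := by
      rw [Finset.sum_eq_single i]
      · rw [(hux i i (x i)).deriv]; simp
      · intro k _ hk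
        rw [(hux i k (x k)).deriv]; simp [hk.symm]
      · simp
    have hlap : ∑ k : Fin N,
        deriv (fun y => deriv (fun z => u i t (Function.update x k z)) y) (x k) = 0 := by
      refine Finset.sum_eq_zero fun k _ => ?_
      simp only [(hux i k _).deriv, deriv_const]
    have hpow : ρ t x ^ (γ - 1) = F / A ^ (γ - 1) := by
      rw [hρ, Real.div_rpow (Real.rpow_nonneg hF.le _) hApos.le, ← Real.rpow_mul hF.le,
        one_div_mul_cancel hγ1, Real.rpow_one]
    have hgrad : deriv (fun y => (ρ t (Function.update x i y)) ^ γ) (x i)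
        = -(ρ t x / F * (ξ * (x i + d i) / (K * γ * (a i t) ^ 2))) * γ * (F / A ^ (γ - 1)) := by
      have h := (hρx i).rpow_const (p := γ) (Or.inl (by simpa using hρpos.ne'))
      rw [h.deriv]
      simp only [Function.update_eq_self]
      rw [hpow]
    have hAp : A ^ (γ - 1) ≠ 0 := (Real.rpow_pos_of_pos hApos _).ne'
    rw [hut, hsum, hlap, hgrad, hEmden i t ht, hu, ← hAdef]
    have := hane i
    generalize A ^ (γ - 1) = B at *
    field_simp
    ring
end

section
/- Let ξ > 0, a₀ > 0 and a₁ ∈ ℝ. Let T ∈ (0, ∞] and let a : [0,T) → ℝ be a twice differentiable function with a(t) > 0 for all t ∈ [0,T), satisfying ä(t) = ξ / a(t), a(0) = a₀, ȧ(0) = a₁. Then for all t ∈ [0,T): a(t) ≥ a₀ · exp(−a₁²/(2ξ)). -/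
open scoped ENNReal

/-- For `ξ > 0`, a positive, twice differentiable solution of
`ä = ξ/a` on `[0,T)` with `a(0) = a₀ > 0`, `ȧ(0) = a₁` satisfies the lower
bound `a(t) ≥ a₀ exp(−a₁²/(2ξ))` on `[0,T)`. -/
theorem emden_gamma_one_xi_pos_lower_bound
    (ξ a₀ a₁ : ℝ) (hξ : 0 < ξ) (ha₀ : 0 < a₀)
    (T : ℝ≥0∞) (hT : 0 < T)
    (a : ℝ → ℝ)
    (ha_pos : ∀ t : ℝ, 0 ≤ t → ENNReal.ofReal t < T → 0 < a t)
    (ha_diff : ∀ t : ℝ, 0 ≤ t → ENNReal.ofReal t < T →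
      DifferentiableAt ℝ a t ∧ DifferentiableAt ℝ (deriv a) t)
    (hODE : ∀ t : ℝ, 0 ≤ t → ENNReal.ofReal t < T → deriv (deriv a) t = ξ / a t)
    (h0 : a 0 = a₀) (h1 : deriv a 0 = a₁) :
    ∀ t : ℝ, 0 ≤ t → ENNReal.ofReal t < T →
      a₀ * Real.exp (-a₁ ^ 2 / (2 * ξ)) ≤ a t := by
  intro t ht htT
  have hlt : ∀ s ∈ Set.Icc (0 : ℝ) t, ENNReal.ofReal s < T := fun s hs =>
    lt_of_le_of_lt (ENNReal.ofReal_le_ofReal hs.2) htT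
  have hder : ∀ s ∈ Set.Icc (0 : ℝ) t,
      HasDerivAt (fun s => (deriv a s) ^ 2 / 2 - ξ * Real.log (a s)) 0 s := by
    intro s hs
    have hp := ha_pos s hs.1 (hlt s hs)
    obtain ⟨hd1, hd2⟩ := ha_diff s hs.1 (hlt s hs)
    have h2 := hd2.hasDerivAt
    rw [hODE s hs.1 (hlt s hs)] at h2
    have h3 := ((h2.pow 2).div_const 2).sub ((hd1.hasDerivAt.log hp.ne').const_mul ξ)
    refine h3.congr_deriv ?_
    field_simp
    norm_num
  have hc := constant_of_has_deriv_right_zero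
    (f := fun s => (deriv a s) ^ 2 / 2 - ξ * Real.log (a s)) (a := 0) (b := t)
    (fun s hs => (hder s hs).continuousAt.continuousWithinAt)
    (fun s hs => (hder s ⟨hs.1, hs.2.le⟩).hasDerivWithinAt) t ⟨ht, le_rfl⟩
  simp only [h0, h1] at hc
  have hp := ha_pos t ht htT
  rw [← Real.log_le_log_iff (by positivity) hp,
    Real.log_mul ha₀.ne' (Real.exp_pos _).ne', Real.log_exp]
  have h4 : ξ * (-a₁ ^ 2 / (2 * ξ)) = -a₁ ^ 2 / 2 := by field_simp
  refine le_of_mul_le_mul_left ?_ hξ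
  rw [mul_add, h4]
  nlinarith [sq_nonneg (deriv a t)]
end

section
/- Let ξ > 0, a₀ > 0 and a₁ ∈ ℝ. Then there exists a twice differentiable function a : [0,∞) → ℝ with a(t) > 0 for all t ≥ 0 satisfying ä(t) = ξ / a(t) for all t ≥ 0, a(0) = a₀ and ȧ(0) = a₁; i.e., the Emden equation with γ = 1, ξ > 0 has a global-in-time positive solution. -/
/-- For `ξ > 0`, the Emden equation `ä = ξ/a` with `a(0) = a₀ > 0`
and `ȧ(0) = a₁` has a global-in-time positive, twice differentiable solution
on `[0,∞)`. -/
theorem emden_gamma_one_xi_pos_global_existence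
    (ξ a₀ a₁ : ℝ) (hξ : 0 < ξ) (ha₀ : 0 < a₀) :
    ∃ a : ℝ → ℝ,
      (∀ t : ℝ, 0 ≤ t → 0 < a t) ∧
      (∀ t : ℝ, 0 ≤ t → DifferentiableAt ℝ a t ∧ DifferentiableAt ℝ (deriv a) t) ∧
      (∀ t : ℝ, 0 ≤ t → deriv (deriv a) t = ξ / a t) ∧
      a 0 = a₀ ∧ deriv a 0 = a₁ := by
  obtain ⟨A, hA⟩ : ∃ A : ℝ, A = a₀ * Real.exp (-(a₁ ^ 2 / (2 * ξ))) := ⟨_, rfl⟩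
  have hA0 : 0 < A := by rw [hA]; positivity
  obtain ⟨F, hF⟩ : ∃ F : ℝ → ℝ, F = fun s => A * Real.exp (s ^ 2 / (2 * ξ)) := ⟨_, rfl⟩
  have hFc : Continuous F := by rw [hF]; fun_prop
  have hFpos : ∀ s, 0 < F s := by intro s; rw [hF]; positivity
  have hFge : ∀ s, A ≤ F s := by
    intro s
    rw [hF]
    have : 1 ≤ Real.exp (s ^ 2 / (2 * ξ)) := Real.one_le_exp (by positivity)
    show A ≤ A * _
    nlinarith
  have hFa : F a₁ = a₀ := by
    rw [hF]
    show A * _ = a₀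
    rw [hA, mul_assoc, ← Real.exp_add]
    simp
  -- time as a function of velocity
  obtain ⟨T, hT⟩ : ∃ T : ℝ → ℝ, T = fun v => ∫ s in a₁..v, F s / ξ := ⟨_, rfl⟩
  have hTd : ∀ v, HasDerivAt T (F v / ξ) v := by
    intro v
    rw [hT]
    exact (hFc.div_const ξ).integral_hasStrictDerivAt a₁ v |>.hasDerivAt
  have hT0 : T a₁ = 0 := by rw [hT]; simp
  have hTc : Continuous T := continuous_iff_continuousAt.2 fun v => (hTd v).continuousAt
  have hTm : StrictMono T := strictMono_of_deriv_pos fun v => by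
    rw [(hTd v).deriv]; exact div_pos (hFpos v) hξ
  have hGm : Monotone (fun v => T v - A / ξ * v) := by
    have hd : ∀ v, HasDerivAt (fun v => T v - A / ξ * v) (F v / ξ - A / ξ * 1) v := fun v =>
      (hTd v).sub ((hasDerivAt_id v).const_mul (A / ξ))
    apply monotone_of_deriv_nonneg (fun v => (hd v).differentiableAt)
    intro v
    rw [(hd v).deriv]
    have := div_le_div_of_nonneg_right (hFge v) hξ.le
    linarith
  have hc : 0 < A / ξ := div_pos hA0 hξ
  have hTs : Function.Surjective T := by
    apply hTc.surjective
    · apply Filter.tendsto_atTop_mono' _ (f₁ := fun v => A / ξ * v + (T a₁ - A / ξ * a₁))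
      · filter_upwards [Filter.eventually_ge_atTop a₁] with v hv
        have := hGm hv
        simp only at this
        linarith
      · exact Filter.tendsto_atTop_add_const_right _ _ (Filter.tendsto_id.const_mul_atTop hc)
    · apply Filter.tendsto_atBot_mono' _ (f₁ := fun v => A / ξ * v + (T a₁ - A / ξ * a₁))
      · filter_upwards [Filter.eventually_le_atBot a₁] with v hv
        have := hGm hv
        simp only at this
        linarith
      · exact Filter.tendsto_atBot_add_const_right _ _ (Filter.tendsto_id.const_mul_atBot hc)
  -- velocity as a function of time
  let e := hTm.orderIsoOfSurjective T hTs
  obtain ⟨V, hV⟩ : ∃ V : ℝ → ℝ, V = fun t => e.symm t := ⟨_, rfl⟩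
  have hVc : Continuous V := by rw [hV]; exact e.symm.continuous
  have hTV : ∀ t, T (V t) = t := by
    intro t; rw [hV]; exact e.apply_symm_apply t
  have hV0 : V 0 = a₁ := hTm.injective (by rw [hTV, hT0])
  have hVd : ∀ t, HasDerivAt V (ξ / F (V t)) t := by
    intro t
    have h := HasDerivAt.of_local_left_inverse hVc.continuousAt (hTd (V t))
      (div_pos (hFpos _) hξ).ne' (Filter.Eventually.of_forall hTV)
    rwa [inv_div] at h
  have hFd : ∀ v, HasDerivAt F (F v * (v / ξ)) v := by
    intro v
    have h := ((((hasDerivAt_id v).pow 2).div_const (2 * ξ)).exp).const_mul A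
    rw [hF]
    refine HasDerivAt.congr_deriv h ?_
    simp
    field_simp
  have had : ∀ t, HasDerivAt (fun t => F (V t)) (V t) t := by
    intro t
    have h := (hFd (V t)).comp t (hVd t)
    refine HasDerivAt.congr_deriv h ?_
    have := (hFpos (V t)).ne'
    field_simp
  have hderiv : deriv (fun t => F (V t)) = V := funext fun t => (had t).deriv
  refine ⟨fun t => F (V t), fun t _ => hFpos _, fun t _ => ⟨(had t).differentiableAt, ?_⟩,
    fun t _ => ?_, ?_, ?_⟩
  · rw [hderiv]; exact (hVd t).differentiableAt
  · rw [hderiv]; exact (hVd t).deriv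
  · show F (V 0) = a₀
    rw [hV0, hFa]
  · rw [hderiv, hV0]
end

section
/- Let ξ < 0, a₀ > 0 and a₁ ∈ ℝ. Let T ∈ (0, ∞] and let a : [0,T) → ℝ be a twice differentiable function with a(t) > 0 for all t ∈ [0,T), satisfying ä(t) = ξ / a(t), a(0) = a₀, ȧ(0) = a₁. Then for all t ∈ [0,T): a(t) ≤ a₀ · exp(a₁²/(2|ξ|)). -/
open scoped ENNReal

/-- For `ξ < 0`, a positive, twice differentiable solution of
`ä = ξ/a` on `[0,T)` with `a(0) = a₀ > 0`, `ȧ(0) = a₁` satisfies the upper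
bound `a(t) ≤ a₀ exp(a₁²/(2|ξ|))` on `[0,T)`. -/
theorem emden_gamma_one_xi_neg_upper_bound
    (ξ a₀ a₁ : ℝ) (hξ : ξ < 0) (ha₀ : 0 < a₀)
    (T : ℝ≥0∞) (hT : 0 < T)
    (a : ℝ → ℝ)
    (ha_pos : ∀ t : ℝ, 0 ≤ t → ENNReal.ofReal t < T → 0 < a t)
    (ha_diff : ∀ t : ℝ, 0 ≤ t → ENNReal.ofReal t < T →
      DifferentiableAt ℝ a t ∧ DifferentiableAt ℝ (deriv a) t)
    (hODE : ∀ t : ℝ, 0 ≤ t → ENNReal.ofReal t < T → deriv (deriv a) t = ξ / a t)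
    (h0 : a 0 = a₀) (h1 : deriv a 0 = a₁) :
    ∀ t : ℝ, 0 ≤ t → ENNReal.ofReal t < T →
      a t ≤ a₀ * Real.exp (a₁ ^ 2 / (2 * |ξ|)) := by
  intro t ht htT
  have hlt : ∀ s ∈ Set.Icc (0 : ℝ) t, ENNReal.ofReal s < T := fun s hs =>
    lt_of_le_of_lt (ENNReal.ofReal_le_ofReal hs.2) htT
  have hder : ∀ s ∈ Set.Icc (0 : ℝ) t,
      HasDerivAt (fun s => (deriv a s) ^ 2 / 2 - ξ * Real.log (a s)) 0 s := by
    intro s hs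
    have hp := ha_pos s hs.1 (hlt s hs)
    obtain ⟨d1, d2⟩ := ha_diff s hs.1 (hlt s hs)
    have e := hODE s hs.1 (hlt s hs)
    have k1 := d1.hasDerivAt
    have k2 := d2.hasDerivAt
    rw [e] at k2
    have k := ((k2.pow 2).div_const 2).sub ((k1.log hp.ne').const_mul ξ)
    refine HasDerivAt.congr_deriv (f := fun s => (deriv a s) ^ 2 / 2 - ξ * Real.log (a s)) k ?_
    have := hp.ne'
    field_simp
    ring
  have hE := constant_of_has_deriv_right_zero
    (fun s hs => (hder s hs).continuousAt.continuousWithinAt)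
    (fun s hs => (hder s ⟨hs.1, hs.2.le⟩).hasDerivWithinAt) t ⟨ht, le_rfl⟩
  simp only [h0, h1] at hE
  have hp := ha_pos t ht htT
  rw [abs_of_neg hξ, ← Real.log_le_log_iff hp (by positivity),
    Real.log_mul ha₀.ne' (Real.exp_pos _).ne', Real.log_exp, ← sub_le_iff_le_add',
    le_div_iff₀ (by linarith)]
  nlinarith [sq_nonneg (deriv a t)]
end

section
/- Let ξ < 0, a₀ > 0 and a₁ ∈ ℝ. Then there is no twice differentiable function a : [0,∞) → ℝ with a(t) > 0 for all t ≥ 0 satisfying ä(t) = ξ / a(t) for all t ≥ 0, a(0) = a₀ and ȧ(0) = a₁; i.e., every positive solution of the Emden equation with γ = 1 and ξ < 0 breaks down (a reaches 0) in finite time. -/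
theorem emden_aux_le (f f' : ℝ → ℝ) (h : ∀ t, 0 ≤ t → HasDerivAt f (f' t) t)
    (h' : ∀ t, 0 ≤ t → f' t ≤ 0) (t : ℝ) (ht : 0 ≤ t) : f t ≤ f 0 := by
  have : AntitoneOn f (Set.Ici 0) := by
    apply antitoneOn_of_deriv_nonpos (convex_Ici 0)
    · exact fun x hx => (h x hx).continuousAt.continuousWithinAt
    · intro x hx
      rw [interior_Ici] at hx
      exact (h x (le_of_lt hx)).differentiableAt.differentiableWithinAt
    · intro x hx
      rw [interior_Ici] at hx
      rw [(h x (le_of_lt hx)).deriv]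
      exact h' x (le_of_lt hx)
  exact this (Set.mem_Ici.2 le_rfl) (Set.mem_Ici.2 ht) ht

/-- For `ξ < 0`, there is no global-in-time positive, twice
differentiable solution on `[0,∞)` of the Emden equation `ä = ξ/a` with
`a(0) = a₀ > 0`, `ȧ(0) = a₁`: every positive solution breaks down in finite
time. -/
theorem emden_gamma_one_xi_neg_no_global_solution
    (ξ a₀ a₁ : ℝ) (hξ : ξ < 0) (ha₀ : 0 < a₀) :
    ¬ ∃ a : ℝ → ℝ,
      (∀ t : ℝ, 0 ≤ t → 0 < a t) ∧
      (∀ t : ℝ, 0 ≤ t → DifferentiableAt ℝ a t ∧ DifferentiableAt ℝ (deriv a) t) ∧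
      (∀ t : ℝ, 0 ≤ t → deriv (deriv a) t = ξ / a t) ∧
      a 0 = a₀ ∧ deriv a 0 = a₁ := by
  rintro ⟨a, hpos, hd, hode, h0, h1⟩
  have hA : ∀ t, 0 ≤ t → HasDerivAt a (deriv a t) t := fun t ht => (hd t ht).1.hasDerivAt
  have hB : ∀ t, 0 ≤ t → HasDerivAt (deriv a) (ξ / a t) t := fun t ht => by
    rw [← hode t ht]; exact (hd t ht).2.hasDerivAt
  -- energy bound
  have hE := emden_aux_le (fun t => deriv a t * deriv a t - 2 * ξ * Real.log (a t))
    (fun t => (ξ / a t * deriv a t + deriv a t * (ξ / a t)) - 2 * ξ * (deriv a t / a t))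
    (fun t ht => ((hB t ht).mul (hB t ht)).sub
      (((hA t ht).log (hpos t ht).ne').const_mul (2 * ξ)))
    (fun t ht => le_of_eq (by ring))
  simp only [h0, h1] at hE
  obtain ⟨K, hK⟩ : ∃ K, K = (a₁ * a₁ - 2 * ξ * Real.log a₀) / (-(2 * ξ)) := ⟨_, rfl⟩
  have hM : ∀ t, 0 ≤ t → a t ≤ Real.exp K := by
    intro t ht
    rw [← Real.log_le_iff_le_exp (hpos t ht), hK, le_div_iff₀ (by linarith)]
    nlinarith [hE t ht, mul_self_nonneg (deriv a t)]
  obtain ⟨c, hc⟩ : ∃ c, c = -ξ / Real.exp K := ⟨_, rfl⟩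
  have hcpos : 0 < c := by rw [hc]; exact div_pos (by linarith) (Real.exp_pos K)
  have hacc : ∀ t, 0 ≤ t → ξ / a t + c ≤ 0 := by
    intro t ht
    have : -ξ / Real.exp K ≤ -ξ / a t :=
      div_le_div_of_nonneg_left (by linarith) (hpos t ht) (hM t ht)
    rw [neg_div _ ξ, neg_div _ ξ] at this
    rw [hc, neg_div]; linarith
  have hV := emden_aux_le (fun t => deriv a t + c * t) (fun t => ξ / a t + c * 1)
    (fun t ht => (hB t ht).add ((hasDerivAt_id t).const_mul c))
    (fun t ht => by simpa using hacc t ht)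
  simp only [h1, mul_zero, add_zero] at hV
  have hX := emden_aux_le (fun t => a t + (c / 2 * (t * t) - a₁ * t))
    (fun t => deriv a t + (c / 2 * (1 * t + t * 1) - a₁ * 1))
    (fun t ht => (hA t ht).add ((((hasDerivAt_id t).mul (hasDerivAt_id t)).const_mul (c/2)).sub
      ((hasDerivAt_id t).const_mul a₁)))
    (fun t ht => by have := hV t ht; linarith)
  simp only [h0, mul_zero, add_zero, sub_zero] at hX
  obtain ⟨T, hT⟩ : ∃ T, T = 1 + 2 * (|a₁| + a₀) / c := ⟨_, rfl⟩
  have hq : 0 ≤ 2 * (|a₁| + a₀) / c := by positivity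
  have hT1 : 1 ≤ T := by linarith
  have hcT : c * T = c + 2 * (|a₁| + a₀) := by rw [hT]; field_simp
  have e1 := hX T (by linarith)
  have e2 := hpos T (by linarith)
  have e3 : c / 2 * (T * T) = (c / 2 + (|a₁| + a₀)) * T := by
    linear_combination T / 2 * hcT
  rw [e3] at e1
  have e4 : a₁ * T ≤ |a₁| * T := mul_le_mul_of_nonneg_right (le_abs_self _) (by linarith)
  have e5 : a₀ * 1 ≤ a₀ * T := mul_le_mul_of_nonneg_left hT1 ha₀.le
  have e6 : 0 < c / 2 * T := by apply mul_pos <;> linarith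
  nlinarith
end

section
/- Let N ≥ 2 be an integer, γ > 1 and ξ < 0. Let T ∈ (0, ∞] and let a_1,…,a_N : [0,T) → ℝ be twice differentiable functions with a_i(t) > 0 for all t ∈ [0,T), satisfying the Emden dynamical system ä_i(t) = ξ / (a_i(t)·(∏_{k=1}^N a_k(t))^{γ−1}), with a_i(0) = a_{i0} > 0 and ȧ_i(0) = a_{i1}. Suppose a_{j1} < 0 for at least one index j. Then T ≤ min{ −a_{i0}/a_{i1} : i ∈ {1,…,N}, a_{i1} < 0 }; i.e., the positive solution cannot be continued past this finite time. -/
open scoped ENNReal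

/-- For `γ > 1` and `ξ < 0`, if the positive solution
`a₁,…,a_N` of the Emden dynamical system `äᵢ = ξ/(aᵢ (∏ₖ aₖ)^{γ−1})` on
`[0,T)` has some initial velocity `a_{j1} < 0`, then the solution cannot be
continued past the finite time `min{−a_{i0}/a_{i1} : a_{i1} < 0}`, i.e.
`T ≤ min{−a_{i0}/a_{i1} : a_{i1} < 0}`. -/
theorem emden_system_xi_neg_blowup
    (N : ℕ) (hN : 2 ≤ N)
    (γ ξ : ℝ) (hγ : 1 < γ) (hξ : ξ < 0)
    (T : ℝ≥0∞) (hT : 0 < T)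
    (a : Fin N → ℝ → ℝ) (a0 a1 : Fin N → ℝ)
    (ha0 : ∀ i : Fin N, 0 < a0 i)
    (ha_pos : ∀ i : Fin N, ∀ t : ℝ, 0 ≤ t → ENNReal.ofReal t < T → 0 < a i t)
    (ha_diff : ∀ i : Fin N, ∀ t : ℝ, 0 ≤ t → ENNReal.ofReal t < T →
      DifferentiableAt ℝ (a i) t ∧ DifferentiableAt ℝ (deriv (a i)) t)
    (hEmden : ∀ i : Fin N, ∀ t : ℝ, 0 ≤ t → ENNReal.ofReal t < T →
      deriv (deriv (a i)) t = ξ / (a i t * (∏ k : Fin N, a k t) ^ (γ - 1)))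
    (hinit0 : ∀ i : Fin N, a i 0 = a0 i)
    (hinit1 : ∀ i : Fin N, deriv (a i) 0 = a1 i)
    (hj : ∃ j : Fin N, a1 j < 0) :
    T ≤ sInf {x : ℝ≥0∞ | ∃ i : Fin N, a1 i < 0 ∧ x = ENNReal.ofReal (-(a0 i) / a1 i)} := by
  refine le_sInf ?_
  rintro x ⟨i, hi, rfl⟩
  by_contra hlt
  rw [not_le] at hlt
  set τ : ℝ := -(a0 i) / a1 i with hτ
  have hτ0 : 0 < τ := div_pos_of_neg_of_neg (by linarith [ha0 i]) hi
  have hin : ∀ t ∈ Set.Icc (0 : ℝ) τ, 0 ≤ t ∧ ENNReal.ofReal t < T := fun t ht =>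
    ⟨ht.1, lt_of_le_of_lt (ENNReal.ofReal_le_ofReal ht.2) hlt⟩
  have hd : AntitoneOn (deriv (a i)) (Set.Icc 0 τ) := by
    refine antitoneOn_of_deriv_nonpos (convex_Icc 0 τ) ?_ ?_ ?_
    · intro t ht
      exact (ha_diff i t (hin t ht).1 (hin t ht).2).2.continuousAt.continuousWithinAt
    · intro t ht
      have h := hin t (interior_subset ht)
      exact (ha_diff i t h.1 h.2).2.differentiableWithinAt
    · intro t ht
      have h := hin t (interior_subset ht)
      rw [hEmden i t h.1 h.2]
      have hp : 0 < ∏ k : Fin N, a k t := Finset.prod_pos fun k _ => ha_pos k t h.1 h.2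
      exact div_nonpos_of_nonpos_of_nonneg hξ.le
        (mul_pos (ha_pos i t h.1 h.2) (Real.rpow_pos_of_pos hp _)).le
  have h0 : (0 : ℝ) ∈ Set.Icc (0 : ℝ) τ := ⟨le_rfl, hτ0.le⟩
  have hτm : τ ∈ Set.Icc (0 : ℝ) τ := ⟨hτ0.le, le_rfl⟩
  have hder : ∀ t ∈ Set.Icc (0 : ℝ) τ,
      HasDerivAt (fun s => a i s - a1 i * s) (deriv (a i) t - a1 i * 1) t := fun t ht =>
    (ha_diff i t (hin t ht).1 (hin t ht).2).1.hasDerivAt.sub ((hasDerivAt_id t).const_mul (a1 i))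
  have hg : AntitoneOn (fun s => a i s - a1 i * s) (Set.Icc 0 τ) := by
    refine antitoneOn_of_deriv_nonpos (convex_Icc 0 τ) ?_ ?_ ?_
    · intro t ht
      exact (hder t ht).continuousAt.continuousWithinAt
    · intro t ht
      exact (hder t (interior_subset ht)).differentiableAt.differentiableWithinAt
    · intro t ht
      have ht' := interior_subset ht
      rw [(hder t ht').deriv]
      have h2 := hd h0 ht' ht'.1
      rw [hinit1] at h2
      linarith
  have hfin := hg h0 hτm hτ0.le
  have hpos := ha_pos i τ hτ0.le hlt
  have hmul : a1 i * τ = -(a0 i) := by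
    rw [hτ]; exact mul_div_cancel₀ _ hi.ne
  simp only [hinit0, hmul] at hfin
  linarith
end

section
/- Let N ≥ 2 be an integer, γ > 1, ξ > 0, and let a_{i0} > 0 and a_{i1} ≥ 0 for i = 1,…,N. Then there exist twice differentiable functions a_1,…,a_N : [0,∞) → ℝ with a_i(t) > 0 for all t ≥ 0 satisfying the Emden dynamical system ä_i(t) = ξ / (a_i(t)·(∏_{k=1}^N a_k(t))^{γ−1}) for all t ≥ 0, with a_i(0) = a_{i0} and ȧ_i(0) = a_{i1}; i.e., the system has a global-in-time positive solution. -/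
open Set Metric in
/-- Global existence for a time-dependent field that is bounded and Lipschitz on compact times. -/
lemma emden_global_ode {E : Type*} [NormedAddCommGroup E] [NormedSpace ℝ E] [CompleteSpace E]
    (f : ℝ → E → E) (x0 : E)
    (hlip : ∀ T : ℝ, 0 < T → ∃ K : NNReal, ∀ t ∈ Icc (-T) T, LipschitzWith K (f t))
    (hbd : ∀ T : ℝ, 0 < T → ∃ L : NNReal, ∀ t ∈ Icc (-T) T, ∀ x, ‖f t x‖ ≤ L)
    (hcont : ∀ x, Continuous (fun t => f t x)) :
    ∃ α : ℝ → E, α 0 = x0 ∧ ∀ t, HasDerivAt α (f t (α t)) t := by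
  have key : ∀ T : ℝ, 0 < T → ∃ α : ℝ → E, α 0 = x0 ∧
      ∀ t ∈ Ioo (-T) T, HasDerivAt α (f t (α t)) t := by
    intro T hT
    obtain ⟨K, hK⟩ := hlip T hT
    obtain ⟨L, hL⟩ := hbd T hT
    have h0 : (0:ℝ) ∈ Icc (-T) T := ⟨by linarith, hT.le⟩
    have hpl : IsPicardLindelof f (⟨0, h0⟩ : Icc (-T) T) x0 (L * T.toNNReal) 0 L K :=
      { lipschitzOnWith := fun t ht => (hK t ht).lipschitzOnWith
        continuousOn := fun x _ => (hcont x).continuousOn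
        norm_le := fun t ht x _ => hL t ht x
        mul_max_le := by simp [Real.coe_toNNReal T hT.le] }
    obtain ⟨α, h1, h2⟩ := hpl.exists_eq_forall_mem_Icc_hasDerivWithinAt₀
    exact ⟨α, h1, fun t ht => (h2 t (Ioo_subset_Icc_self ht)).hasDerivAt (Icc_mem_nhds ht.1 ht.2)⟩
  choose! β hβ0 hβ using key
  have huniq : ∀ S T : ℝ, 0 < S → S ≤ T → EqOn (β S) (β T) (Ioo (-S) S) := by
    intro S T hS hST
    obtain ⟨K, hK⟩ := hlip S hS
    refine ODE_solution_unique_of_mem_Ioo (v := f) (s := fun _ => univ) (t₀ := 0) (K := K)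
      (fun t ht => (hK t (Ioo_subset_Icc_self ht)).lipschitzOnWith) ⟨by linarith, hS⟩
      (fun t ht => ⟨hβ S hS t ht, mem_univ _⟩)
      (fun t ht => ⟨hβ T (by linarith) t ⟨by linarith [ht.1], by linarith [ht.2]⟩, mem_univ _⟩)
      (by rw [hβ0 S hS, hβ0 T (by linarith)])
  refine ⟨fun t => β (|t| + 1) t, by simp [hβ0], fun t => ?_⟩
  have hT : 0 < |t| + 2 := by positivity
  have htm : t ∈ Ioo (-(|t| + 2)) (|t| + 2) := by
    constructor <;> linarith [neg_abs_le t, le_abs_self t]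
  have hself : ∀ s : ℝ, s ∈ Ioo (-(|s| + 1)) (|s| + 1) := fun s => by
    constructor <;> linarith [neg_abs_le s, le_abs_self s]
  have heq : ∀ s, |s| < |t| + 1 → β (|s| + 1) s = β (|t| + 2) s := fun s hs =>
    huniq (|s| + 1) (|t| + 2) (by positivity) (by linarith) (hself s)
  have h := hβ (|t| + 2) hT t htm
  show HasDerivAt _ (f t (β (|t| + 1) t)) t
  rw [heq t (by linarith)]
  refine h.congr_of_eventuallyEq ?_
  have : ∀ᶠ s in nhds t, |s| < |t| + 1 :=
    (continuous_abs.tendsto t).eventually (gt_mem_nhds (by linarith))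
  filter_upwards [this] with s hs using heq s hs

/-- Global existence for `x'' = g x` with `g` bounded and Lipschitz. -/
lemma emden_global_second {E : Type*} [NormedAddCommGroup E] [NormedSpace ℝ E] [CompleteSpace E]
    (g : E → E) (K B : NNReal) (hg : LipschitzWith K g) (hB : ∀ x, ‖g x‖ ≤ B) (x0 v0 : E) :
    ∃ x v : ℝ → E, x 0 = x0 ∧ v 0 = v0 ∧ (∀ t, HasDerivAt x (v t) t) ∧
      ∀ t, HasDerivAt v (g (x t)) t := by
  have H : ∃ z : ℝ → E × E, z 0 = (x0, v0) ∧ ∀ t, HasDerivAt z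
      (-(t • g ((z t).1 + t • (z t).2)), g ((z t).1 + t • (z t).2)) t := by
    refine emden_global_ode (E := E × E)
      (fun t z => (-(t • g (z.1 + t • z.2)), g (z.1 + t • z.2))) (x0, v0) ?_ ?_ ?_
    · intro T hT
      refine ⟨(1 + T.toNNReal) * K * (1 + T.toNNReal), fun t ht => ?_⟩
      refine LipschitzWith.of_dist_le_mul fun z w => ?_
      have htT : |t| ≤ T := abs_le.2 ht
      have e1 : ‖z.1 - w.1‖ ≤ ‖z - w‖ := norm_fst_le (z - w)
      have e2 : ‖z.2 - w.2‖ ≤ ‖z - w‖ := norm_snd_le (z - w)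
      have e3 : ‖g (z.1 + t • z.2) - g (w.1 + t • w.2)‖ ≤ K * ((1 + T) * ‖z - w‖) := by
        have h := hg.dist_le_mul (z.1 + t • z.2) (w.1 + t • w.2)
        rw [dist_eq_norm, dist_eq_norm] at h
        refine h.trans (mul_le_mul_of_nonneg_left ?_ K.2)
        have : z.1 + t • z.2 - (w.1 + t • w.2) = (z.1 - w.1) + t • (z.2 - w.2) := by
          rw [smul_sub]; abel
        rw [this]
        calc _ ≤ ‖z.1 - w.1‖ + ‖t • (z.2 - w.2)‖ := norm_add_le _ _
          _ ≤ ‖z - w‖ + T * ‖z - w‖ := by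
            rw [norm_smul, Real.norm_eq_abs]; gcongr
          _ = _ := by ring
      have hK0 : (0:ℝ) ≤ K := K.2
      have hp : 0 ≤ K * ((1 + T) * ‖z - w‖) := by positivity
      rw [dist_eq_norm, dist_eq_norm]
      have hgoal : (((1 + T.toNNReal) * K * (1 + T.toNNReal) : NNReal) : ℝ) * ‖z - w‖
          = (1 + T) * (K * ((1 + T) * ‖z - w‖)) := by
        push_cast
        rw [Real.coe_toNNReal T hT.le]
        ring
      rw [hgoal]
      refine norm_prod_le_iff.2 ⟨?_, ?_⟩
      · simp only [Prod.fst_sub]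
        rw [neg_sub_neg, ← smul_sub, norm_smul, norm_sub_rev, Real.norm_eq_abs]
        calc _ ≤ T * (K * ((1 + T) * ‖z - w‖)) := by gcongr
          _ ≤ _ := by nlinarith
      · simp only [Prod.snd_sub]
        nlinarith
    · intro T hT
      refine ⟨(1 + T.toNNReal) * B, fun t ht z => ?_⟩
      have htT : |t| ≤ T := abs_le.2 ht
      have h := hB (z.1 + t • z.2)
      have hB0 : (0:ℝ) ≤ B := B.2
      push_cast
      rw [Real.coe_toNNReal T hT.le]
      refine norm_prod_le_iff.2 ⟨?_, ?_⟩
      · simp only [norm_neg, norm_smul, Real.norm_eq_abs]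
        calc _ ≤ T * B := by gcongr
          _ ≤ _ := by nlinarith
      · simp only
        nlinarith
    · intro z
      have := hg.continuous
      fun_prop
  obtain ⟨z, hz0, hz⟩ := H
  have h1 : ∀ t, HasDerivAt (fun t => (z t).1) (-(t • g ((z t).1 + t • (z t).2))) t :=
    fun t => (hz t).fst
  have h2 : ∀ t, HasDerivAt (fun t => (z t).2) (g ((z t).1 + t • (z t).2)) t :=
    fun t => (hz t).snd
  refine ⟨fun t => (z t).1 + t • (z t).2, fun t => (z t).2, by simp [hz0], by simp [hz0],
    fun t => ?_, h2⟩
  have h3 := (h1 t).add ((hasDerivAt_id t).smul (h2 t))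
  refine h3.congr_deriv ?_
  simp

/-- Bounded and Lipschitz real functions. -/
def EmdenBL {X : Type*} [PseudoMetricSpace X] (f : X → ℝ) : Prop :=
  ∃ K B : NNReal, LipschitzWith K f ∧ ∀ x, |f x| ≤ B

lemma EmdenBL.mul {X : Type*} [PseudoMetricSpace X] {f g : X → ℝ} (hf : EmdenBL f)
    (hg : EmdenBL g) : EmdenBL (fun x => f x * g x) := by
  obtain ⟨K, B, h1, h2⟩ := hf
  obtain ⟨K', B', h3, h4⟩ := hg
  refine ⟨B * K' + K * B', B * B', LipschitzWith.of_dist_le_mul fun x y => ?_, fun x => ?_⟩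
  · have a1 := h1.dist_le_mul x y
    have a3 := h3.dist_le_mul x y
    rw [Real.dist_eq] at *
    have : f x * g x - f y * g y = f x * (g x - g y) + (f x - f y) * g y := by ring
    rw [this]
    refine (abs_add_le _ _).trans ?_
    rw [abs_mul, abs_mul]
    push_cast
    rw [add_mul, mul_assoc, mul_right_comm]
    have := h2 x
    have := h4 y
    gcongr
  · rw [abs_mul]
    push_cast
    have := h2 x
    have := h4 x
    gcongr

lemma EmdenBL.const {X : Type*} [PseudoMetricSpace X] (c : ℝ) : EmdenBL (fun _ : X => c) :=
  ⟨0, ‖c‖₊, LipschitzWith.const c, fun x => by simp⟩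

lemma EmdenBL.prod {X ι : Type*} [PseudoMetricSpace X] (s : Finset ι) {f : ι → X → ℝ}
    (hf : ∀ i, EmdenBL (f i)) : EmdenBL (fun x => ∏ i ∈ s, f i x) := by
  classical
  induction s using Finset.induction_on with
  | empty => simpa using EmdenBL.const 1
  | insert a s ha ih =>
    simp only [Finset.prod_insert ha]
    exact (hf a).mul ih

lemma emdenBL_rpow {ι : Type*} [Fintype ι] (i : ι) (c p : ℝ) (hc : 0 < c) (hp : 0 < p) :
    EmdenBL (fun x : ι → ℝ => (max (x i) c) ^ (-p)) := by
  have hl : LipschitzOnWith (p * c ^ (-p - 1)).toNNReal (fun y : ℝ => y ^ (-p))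
      (Set.Ici c) := by
    refine (convex_Ici c).lipschitzOnWith_of_nnnorm_hasDerivWithin_le
      (f' := fun y => -p * y ^ (-p - 1)) (fun y hy => ?_) (fun y hy => ?_)
    · have hy0 : 0 < y := hc.trans_le hy
      exact (Real.hasDerivAt_rpow_const (Or.inl hy0.ne')).hasDerivWithinAt
    · have hy0 : 0 < y := hc.trans_le hy
      rw [← NNReal.coe_le_coe]
      rw [Real.coe_toNNReal _ (by positivity)]
      simp only [coe_nnnorm, norm_mul, norm_neg, Real.norm_eq_abs]
      rw [abs_of_pos hp, abs_of_pos (Real.rpow_pos_of_pos hy0 _)]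
      exact mul_le_mul_of_nonneg_left
        (Real.rpow_le_rpow_of_nonpos hc hy (by linarith)) hp.le
  have hm : LipschitzWith 1 (fun x : ι → ℝ => max (x i) c) :=
    (LipschitzWith.eval (α := fun _ : ι => ℝ) i).max_const c
  refine ⟨(p * c ^ (-p - 1)).toNNReal, (c ^ (-p)).toNNReal, LipschitzWith.of_dist_le_mul fun x y => ?_,
    fun x => ?_⟩
  · refine (hl.dist_le_mul _ (Set.mem_Ici.2 (le_max_right _ _)) _
      (Set.mem_Ici.2 (le_max_right _ _))).trans ?_
    refine mul_le_mul_of_nonneg_left ?_ (NNReal.coe_nonneg _)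
    simpa using hm.dist_le_mul x y
  · have h0 : 0 < max (x i) c := hc.trans_le (le_max_right _ _)
    rw [abs_of_pos (Real.rpow_pos_of_pos h0 _), Real.coe_toNNReal _ (by positivity)]
    exact Real.rpow_le_rpow_of_nonpos hc (le_max_right _ _) (by linarith)


/-- For `γ > 1`, `ξ > 0`, and initial data `a_{i0} > 0`,
`a_{i1} ≥ 0`, the Emden dynamical system `äᵢ = ξ/(aᵢ (∏ₖ aₖ)^{γ−1})`,
`aᵢ(0) = a_{i0}`, `ȧᵢ(0) = a_{i1}` has a global-in-time positive, twice
differentiable solution on `[0,∞)`. -/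
theorem emden_system_xi_pos_global_existence
    (N : ℕ) (hN : 2 ≤ N)
    (γ ξ : ℝ) (hγ : 1 < γ) (hξ : 0 < ξ)
    (a0 a1 : Fin N → ℝ)
    (ha0 : ∀ i : Fin N, 0 < a0 i) (ha1 : ∀ i : Fin N, 0 ≤ a1 i) :
    ∃ a : Fin N → ℝ → ℝ,
      (∀ i : Fin N, ∀ t : ℝ, 0 ≤ t → 0 < a i t) ∧
      (∀ i : Fin N, ∀ t : ℝ, 0 ≤ t →
        DifferentiableAt ℝ (a i) t ∧ DifferentiableAt ℝ (deriv (a i)) t) ∧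
      (∀ i : Fin N, ∀ t : ℝ, 0 ≤ t →
        deriv (deriv (a i)) t = ξ / (a i t * (∏ k : Fin N, a k t) ^ (γ - 1))) ∧
      (∀ i : Fin N, a i 0 = a0 i) ∧
      (∀ i : Fin N, deriv (a i) 0 = a1 i) := by
  have hBL : ∀ i : Fin N, EmdenBL (fun x : Fin N → ℝ =>
      ξ * (max (x i) (a0 i)) ^ (-(1:ℝ)) * ∏ k : Fin N, (max (x k) (a0 k)) ^ (-(γ - 1))) :=
    fun i => ((EmdenBL.const ξ).mul (emdenBL_rpow i _ _ (ha0 i) one_pos)).mul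
      (EmdenBL.prod _ fun k => emdenBL_rpow k _ _ (ha0 k) (by linarith))
  choose K B hK hB using hBL
  obtain ⟨x, v, hx0, hv0, hx, hv⟩ := emden_global_second
    (fun (x : Fin N → ℝ) (i : Fin N) =>
      ξ * (max (x i) (a0 i)) ^ (-(1:ℝ)) * ∏ k : Fin N, (max (x k) (a0 k)) ^ (-(γ - 1)))
    (∑ i, K i) (∑ i, B i)
    (LipschitzWith.of_dist_le_mul fun x y => (dist_pi_le_iff (by positivity)).2 fun i =>
      ((hK i).dist_le_mul x y).trans (mul_le_mul_of_nonneg_right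
        (NNReal.coe_le_coe.2 (Finset.single_le_sum (f := K) (fun _ _ => zero_le)
          (Finset.mem_univ i))) dist_nonneg))
    (fun x => (pi_norm_le_iff_of_nonneg (NNReal.coe_nonneg _)).2 fun i =>
      (hB i x).trans (NNReal.coe_le_coe.2 (Finset.single_le_sum (f := B) (fun _ _ => zero_le)
          (Finset.mem_univ i)))) a0 a1
  have hxi : ∀ i t, HasDerivAt (fun t => x t i) (v t i) t := fun i t => hasDerivAt_pi.1 (hx t) i
  have hvi : ∀ i t, HasDerivAt (fun t => v t i) (ξ * (max (x t i) (a0 i)) ^ (-(1:ℝ)) *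
      ∏ k : Fin N, (max (x t k) (a0 k)) ^ (-(γ - 1))) t := fun i t => hasDerivAt_pi.1 (hv t) i
  have hmpos : ∀ i t, 0 < max (x t i) (a0 i) := fun i t => (ha0 i).trans_le (le_max_right _ _)
  have hvmono : ∀ i, Monotone (fun t => v t i) := fun i => by
    refine monotone_of_deriv_nonneg (fun t => (hvi i t).differentiableAt) fun t => ?_
    rw [(hvi i t).deriv]
    exact mul_nonneg (mul_nonneg hξ.le (Real.rpow_nonneg (hmpos i t).le _))
      (Finset.prod_nonneg fun k _ => Real.rpow_nonneg (hmpos k t).le _)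
  have hvnn : ∀ i t, 0 ≤ t → 0 ≤ v t i := fun i t ht => by
    have h : v 0 i ≤ v t i := hvmono i ht
    rw [hv0] at h
    exact (ha1 i).trans h
  have hxge : ∀ i t, 0 ≤ t → a0 i ≤ x t i := fun i t ht => by
    have hm : MonotoneOn (fun t => x t i) (Set.Ici 0) := by
      refine monotoneOn_of_deriv_nonneg (convex_Ici 0)
        (fun t _ => (hxi i t).continuousAt.continuousWithinAt)
        (fun t _ => (hxi i t).differentiableAt.differentiableWithinAt) fun t ht => ?_
      rw [(hxi i t).deriv]
      exact hvnn i t (interior_subset ht)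
    have h : x 0 i ≤ x t i := hm Set.self_mem_Ici ht ht
    rwa [hx0] at h
  have hd : ∀ i, deriv (fun t => x t i) = fun t => v t i := fun i => funext fun t => (hxi i t).deriv
  have hpos : ∀ i t, 0 ≤ t → 0 < x t i := fun i t ht => (ha0 i).trans_le (hxge i t ht)
  refine ⟨fun i t => x t i, hpos, fun i t ht => ⟨(hxi i t).differentiableAt, ?_⟩, fun i t ht => ?_,
    fun i => by simp [hx0], fun i => ?_⟩
  · rw [hd]
    exact (hvi i t).differentiableAt
  · rw [hd, (hvi i t).deriv]
    have h1 : ∀ k, max (x t k) (a0 k) = x t k := fun k => max_eq_left (hxge k t ht)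
    simp only [h1]
    have hprod : 0 ≤ ∏ k : Fin N, x t k := Finset.prod_nonneg fun k _ => (hpos k t ht).le
    rw [Real.finsetProd_rpow _ _ fun k _ => (hpos k t ht).le, Real.rpow_neg hprod,
      Real.rpow_neg_one, div_eq_mul_inv, mul_inv, mul_assoc]
  · rw [hd]
    simp [hv0]
end
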